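/- Let (G, z, P, b) be an instance of Hitting Paths in a Flower with petals R_1, …, R_n. If the instance has a solution X', then it has a globally canonical solution X, i.e., a solution X such that for every i ∈ [n] the set X ∩ V(R_i) is a well-defined canonical solution for petal R_i. -/

import Mathlib

/-!  Formalization of the "Hitting Paths in a Flower" setting.

A flower graph is a graph with a distinguished core vertex `z` such that every
connected component of `G − z` is a path (a *petal*) no interior vertex of which
is adjacent to `z`.  We represent (up to isomorphism) a flower with `n` petals,
petal `i` having `L i ≥ 1` vertices `r_{i,1}, …, r_{i,L i}`, by the vertex type
`Option (Fin n × ℕ)`: the core `z` is `none`, and `some (i, j)` (for `1 ≤ j ≤ L i`)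
is the `j`-th vertex of petal `i`.  Booleans `al i` / `ar i` record whether the
left/right endpoint of petal `i` is adjacent to the core.  Since hitting a path
only depends on its vertex set, paths are recorded by their vertex sets; the
predicate `IsFlowerPath` characterizes the vertex sets of simple paths of the
flower graph. -/

/-- Vertices of an `n`-petal flower: `none` is the core `z`,
`some (i, j)` is vertex `r_{i,j}` of petal `i`. -/
abbrev FVertex (n : ℕ) := Option (Fin n × ℕ)

/-- The core vertex `z`. -/
def fz {n : ℕ} : FVertex n := none

/-- The vertex `r_{i,j}` of petal `i`. -/
def fv {n : ℕ} (i : Fin n) (j : ℕ) : FVertex n := some (i, j)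

/-- The set of vertices of petal `i` with indices in `s`. -/
def petalSeg {n : ℕ} (i : Fin n) (s : Finset ℕ) : Finset (FVertex n) :=
  s.image (fun j => fv i j)

/-- Index sets of subpaths of petal `i` that can be attached to the core in a simple
path through `z`: the empty set, a prefix `{1, …, c}` whose left endpoint `r_{i,1}`
is adjacent to `z`, or a suffix `{c, …, L i}` whose right endpoint `r_{i,L i}` is
adjacent to `z`. -/
def IsZSeg {n : ℕ} (L : Fin n → ℕ) (al ar : Fin n → Bool) (i : Fin n)
    (s : Finset ℕ) : Prop :=
  s = ∅ ∨
  (al i = true ∧ ∃ c, 1 ≤ c ∧ c ≤ L i ∧ s = Finset.Icc 1 c) ∨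
  (ar i = true ∧ ∃ c, 1 ≤ c ∧ c ≤ L i ∧ s = Finset.Icc c (L i))

/-- `p` is the vertex set of a simple path in the flower graph: either an interval of
one petal, or the core `z` together with (at most) two core-attachable petal segments
which are disjoint if they lie in the same petal. -/
def IsFlowerPath {n : ℕ} (L : Fin n → ℕ) (al ar : Fin n → Bool)
    (p : Finset (FVertex n)) : Prop :=
  (∃ (i : Fin n) (a c : ℕ), 1 ≤ a ∧ a ≤ c ∧ c ≤ L i ∧ p = petalSeg i (Finset.Icc a c)) ∨
  (∃ (i₁ i₂ : Fin n) (s₁ s₂ : Finset ℕ), IsZSeg L al ar i₁ s₁ ∧ IsZSeg L al ar i₂ s₂ ∧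
    (i₁ = i₂ → Disjoint s₁ s₂) ∧ p = insert fz (petalSeg i₁ s₁ ∪ petalSeg i₂ s₂))

/-- An instance `(G, z, P, b)` of Hitting Paths in a Flower: a flower graph with `n`
petals of sizes `L i ≥ 1` (the Booleans `al`, `ar` telling which petal endpoints are
adjacent to the core), a finite set `P` of simple paths in the flower (given by their
vertex sets), and a budget function `b` with `b i ≥ 1`. -/
structure FlowerInstance (n : ℕ) where
  /-- number of vertices of petal `i` -/
  L : Fin n → ℕ
  hL : ∀ i, 1 ≤ L i
  /-- whether the left endpoint `r_{i,1}` of petal `i` is adjacent to the core -/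
  al : Fin n → Bool
  /-- whether the right endpoint `r_{i,L i}` of petal `i` is adjacent to the core -/
  ar : Fin n → Bool
  /-- the set of simple paths to be hit, given by their vertex sets -/
  P : Finset (Finset (FVertex n))
  hP : ∀ p ∈ P, IsFlowerPath L al ar p
  /-- the budget function -/
  b : Fin n → ℕ
  hb : ∀ i, 1 ≤ b i

/-- The (vertex set of) petal `R_i`. -/
def FlowerInstance.petal {n : ℕ} (F : FlowerInstance n) (i : Fin n) :
    Finset (FVertex n) :=
  petalSeg i (Finset.Icc 1 (F.L i))

/-- A solution: a set `X ⊆ V(G) ∖ {z}` that intersects every path of `P` and contains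
exactly `b i` vertices of petal `R_i`, for every `i`. -/
def FlowerInstance.IsSolution {n : ℕ} (F : FlowerInstance n)
    (X : Finset (FVertex n)) : Prop :=
  (∀ x ∈ X, ∃ (i : Fin n) (j : ℕ), 1 ≤ j ∧ j ≤ F.L i ∧ x = fv i j) ∧
  (∀ p ∈ F.P, (X ∩ p).Nonempty) ∧
  (∀ i : Fin n, (X ∩ F.petal i).card = F.b i)

/-- The pairs `(a, c)` with `1 ≤ a ≤ c ≤ L i` such that the interval
`{r_{i,a}, …, r_{i,c}}` of petal `i` is (the vertex set of) a path of `P`;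
these are exactly the paths of `P` contained entirely within petal `R_i`. -/
def FlowerInstance.innerIntervals {n : ℕ} (F : FlowerInstance n) (i : Fin n) :
    Finset (ℕ × ℕ) :=
  ((Finset.Icc 1 (F.L i)) ×ˢ (Finset.Icc 1 (F.L i))).filter
    (fun q => q.1 ≤ q.2 ∧ petalSeg i (Finset.Icc q.1 q.2) ∈ F.P)

/-- The intervals among `I` that are not intersected by `X`. -/
def unhit (I : Finset (ℕ × ℕ)) (X : Finset ℕ) : Finset (ℕ × ℕ) :=
  I.filter (fun q => ∀ j ∈ X, ¬ (q.1 ≤ j ∧ j ≤ q.2))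

/-- Step (2a) of the canonical-solution process: while some interval of `I` is not
intersected by `X`, add the minimum right endpoint of an unhit interval.  The fuel
argument only ensures termination; `I.card` iterations always suffice. -/
def greedyA (I : Finset (ℕ × ℕ)) : ℕ → Finset ℕ → Finset ℕ
  | 0, X => X
  | (fuel + 1), X =>
    if h : (unhit I X).Nonempty then
      greedyA I fuel (insert (((unhit I X).image Prod.snd).min' (h.image _)) X)
    else X

/-- Step (2b) of the canonical-solution process: while `|X| < bdg` and
`Y := Icc lo hi \ X` is nonempty, add the largest element of `Y`.  The fuel
argument only ensures termination; `bdg` iterations always suffice. -/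
def greedyB (lo hi bdg : ℕ) : ℕ → Finset ℕ → Finset ℕ
  | 0, X => X
  | (fuel + 1), X =>
    if h : X.card < bdg ∧ ((Finset.Icc lo hi) \ X).Nonempty then
      greedyB lo hi bdg fuel (insert (((Finset.Icc lo hi) \ X).max' h.2) X)
    else X

/-- The set `X_{i,ℓ}` produced by steps (2), (2a), (2b) of the canonical-solution
process for petal `R_i`, starting from `X_{i,ℓ} = {ℓ}`. -/
def FlowerInstance.canonicalAux {n : ℕ} (F : FlowerInstance n) (i : Fin n) (ℓ : ℕ) :
    Finset ℕ :=
  greedyB ℓ (F.L i) (F.b i) (F.b i)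
    (greedyA (F.innerIntervals i) (F.innerIntervals i).card {ℓ})

/-- The canonical `ℓ`-th solution for petal `R_i` (given by the indices of its
vertices on the petal), or `none` (NIL) if step (1) applies — some path of `P` is
contained within `{r_{i,1}, …, r_{i,ℓ-1}}` — or if the produced set does not have
exactly `b i` elements (step (2c)). -/
def FlowerInstance.canonical {n : ℕ} (F : FlowerInstance n) (i : Fin n) (ℓ : ℕ) :
    Option (Finset ℕ) :=
  if ∃ q ∈ F.innerIntervals i, q.2 < ℓ then none
  else if (F.canonicalAux i ℓ).card = F.b i then some (F.canonicalAux i ℓ) else none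

/-!
On each petal, run the greedy process from the first vertex `ℓ` of the given solution. Each greedy
choice is the right endpoint of a path that the given solution must also hit beyond the previous
choice, so step (2a) never spends more vertices than the given solution has spent so far, and the
budget suffices. The outcome also spans the given solution: it starts at the same vertex, and it
reaches the end of the petal if step (2b) adds anything, while otherwise step (2a) has spent the
whole budget and hence has passed all vertices of the given solution. A path through the core meets
a petal in a prefix or a suffix, which a spanning set hits whenever the given solution does.
-/

open Finset

section IntervalFamily

variable {I : Finset (ℕ × ℕ)} {S X Y : Finset ℕ}

/-- `X` meets every interval `[q.1, q.2]` with `q ∈ I`, as the outcome of step (2a)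
has to. -/
def IsHittingSet (I : Finset (ℕ × ℕ)) (X : Finset ℕ) : Prop :=
  ∀ q ∈ I, (X ∩ Icc q.1 q.2).Nonempty

lemma mem_unhit {q : ℕ × ℕ} : q ∈ unhit I X ↔ q ∈ I ∧ Disjoint X (Icc q.1 q.2) := by
  simp only [unhit, mem_filter, disjoint_left, mem_Icc]

lemma unhit_anti (h : X ⊆ Y) : unhit I Y ⊆ unhit I X := fun _ hq =>
  mem_unhit.2 ((mem_unhit.1 hq).imp_right (disjoint_of_subset_left h))

lemma unhit_eq_empty_iff : unhit I X = ∅ ↔ IsHittingSet I X := by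
  simp only [eq_empty_iff_forall_notMem, mem_unhit, not_and, not_disjoint_iff_nonempty_inter,
    IsHittingSet]

lemma IsHittingSet.mono (h : IsHittingSet I X) (hXY : X ⊆ Y) : IsHittingSet I Y := fun q hq =>
  (h q hq).mono (inter_subset_inter_right hXY)

lemma exists_greedyA_succ (h : (unhit I X).Nonempty) (fuel : ℕ) :
    ∃ q ∈ unhit I X, (∀ r ∈ unhit I X, q.2 ≤ r.2) ∧
      greedyA I (fuel + 1) X = greedyA I fuel (insert q.2 X) := by
  obtain ⟨q, hq, hmin⟩ := mem_image.1 (min'_mem _ (h.image Prod.snd))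
  refine ⟨q, hq, fun r hr => ?_, by rw [greedyA, dif_pos h, hmin]⟩
  exact hmin ▸ min'_le _ _ (mem_image_of_mem _ hr)

lemma greedyA_of_unhit_eq_empty (h : unhit I X = ∅) (fuel : ℕ) : greedyA I fuel X = X := by
  cases fuel with
  | zero => rfl
  | succ => rw [greedyA, dif_neg (not_nonempty_iff_eq_empty.2 h)]

lemma greedyA_induction {p : Finset ℕ → Prop}
    (step : ∀ X, p X → ∀ q ∈ unhit I X, (∀ r ∈ unhit I X, q.2 ≤ r.2) → p (insert q.2 X))
    (h : p X) (fuel : ℕ) : p (greedyA I fuel X) := by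
  induction fuel generalizing X with
  | zero => exact h
  | succ fuel ih =>
    rcases (unhit I X).eq_empty_or_nonempty with hempty | hne
    · rwa [greedyA_of_unhit_eq_empty hempty]
    · obtain ⟨q, hq, hmin, hstep⟩ := exists_greedyA_succ hne fuel
      exact hstep ▸ ih (step X h q hq hmin)

lemma subset_greedyA (fuel : ℕ) : X ⊆ greedyA I fuel X :=
  greedyA_induction (fun _ h _ _ _ => h.trans (subset_insert _ _)) Subset.rfl fuel

lemma greedyA_subset (hX : X ⊆ Y) (hI : ∀ q ∈ I, q.2 ∈ Y) (fuel : ℕ) : greedyA I fuel X ⊆ Y :=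
  greedyA_induction (p := (· ⊆ Y))
    (fun _ h q hq _ => insert_subset (hI q (mem_unhit.1 hq).1) h) hX fuel

lemma card_unhit_insert_lt {q : ℕ × ℕ} (hq : q ∈ unhit I X) {j : ℕ} (hj : j ∈ Icc q.1 q.2) :
    #(unhit I (insert j X)) < #(unhit I X) := by
  refine card_lt_card ((ssubset_iff_of_subset (unhit_anti (subset_insert _ _))).2 ⟨q, hq, ?_⟩)
  exact fun h => disjoint_left.1 (mem_unhit.1 h).2 (mem_insert_self _ _) hj

lemma isHittingSet_greedyA (hI : ∀ q ∈ I, q.1 ≤ q.2) {fuel : ℕ} (hfuel : #(unhit I X) ≤ fuel) :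
    IsHittingSet I (greedyA I fuel X) := by
  induction fuel generalizing X with
  | zero => exact unhit_eq_empty_iff.1 (card_eq_zero.1 (Nat.le_zero.1 hfuel))
  | succ fuel ih =>
    rcases (unhit I X).eq_empty_or_nonempty with hempty | hne
    · rw [greedyA_of_unhit_eq_empty hempty]
      exact unhit_eq_empty_iff.1 hempty
    · obtain ⟨q, hq, -, hstep⟩ := exists_greedyA_succ hne fuel
      have hlt := card_unhit_insert_lt hq (right_mem_Icc.2 (hI q (mem_unhit.1 hq).1))
      exact hstep ▸ ih (by omega)

/-- The partial hitting set `X` stays ahead of the competitor `S`: for some `m ∈ X` beyond which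
all intervals not hit by `X` begin, `S` spends at least `#X` elements up to `m`. This is the
invariant of step (2a), with `m` the element added last. -/
def StaysAhead (I : Finset (ℕ × ℕ)) (S X : Finset ℕ) : Prop :=
  ∃ m ∈ X, (∀ q ∈ unhit I X, m < q.1) ∧ #X ≤ #{s ∈ S | s ≤ m}

lemma staysAhead_singleton (hS : IsHittingSet I S) {ℓ : ℕ} (hℓ : IsLeast (S : Set ℕ) ℓ) :
    StaysAhead I S {ℓ} := by
  refine ⟨ℓ, mem_singleton_self ℓ, fun q hq => ?_, ?_⟩
  · obtain ⟨hqI, hdisj⟩ := mem_unhit.1 hq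
    obtain ⟨s, hs⟩ := hS q hqI
    obtain ⟨hsS, hsq⟩ := mem_inter.1 hs
    have hℓs : ℓ ≤ s := hℓ.2 hsS
    have hℓq : ℓ ∉ Icc q.1 q.2 := disjoint_singleton_left.1 hdisj
    rw [mem_Icc] at hsq hℓq
    omega
  · rw [card_singleton, Nat.succ_le_iff, card_pos]
    exact ⟨ℓ, mem_filter.2 ⟨hℓ.1, le_rfl⟩⟩

lemma StaysAhead.insert_snd (h : StaysAhead I S X) (hS : IsHittingSet I S) {q : ℕ × ℕ}
    (hq : q ∈ unhit I X) (hmin : ∀ r ∈ unhit I X, q.2 ≤ r.2) : StaysAhead I S (insert q.2 X) := by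
  obtain ⟨m, -, hm, hcard⟩ := h
  refine ⟨q.2, mem_insert_self _ _, fun r hr => ?_, ?_⟩
  · have hqr : q.2 ≤ r.2 := hmin r (unhit_anti (subset_insert _ _) hr)
    have hnot : q.2 ∉ Icc r.1 r.2 := disjoint_left.1 (mem_unhit.1 hr).2 (mem_insert_self _ _)
    rw [mem_Icc] at hnot
    omega
  · obtain ⟨s, hs⟩ := hS q (mem_unhit.1 hq).1
    obtain ⟨hsS, hsq⟩ := mem_inter.1 hs
    rw [mem_Icc] at hsq
    have hmq : m < q.1 := hm q hq
    have hsub : {s ∈ S | s ≤ m} ⊆ {s ∈ S | s ≤ q.2} :=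
      monotone_filter_right S fun _ _ hx => hx.trans (by omega)
    have hlt : #{s ∈ S | s ≤ m} < #{s ∈ S | s ≤ q.2} :=
      card_lt_card ((ssubset_iff_of_subset hsub).2
        ⟨s, mem_filter.2 ⟨hsS, hsq.2⟩, fun hsm => by have := (mem_filter.1 hsm).2; omega⟩)
    calc #(insert q.2 X) ≤ #X + 1 := card_insert_le _ _
      _ ≤ #{s ∈ S | s ≤ m} + 1 := by gcongr
      _ ≤ #{s ∈ S | s ≤ q.2} := hlt

lemma StaysAhead.greedyA (h : StaysAhead I S X) (hS : IsHittingSet I S) (fuel : ℕ) :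
    StaysAhead I S (greedyA I fuel X) :=
  greedyA_induction (fun _ hX _ hq hmin => hX.insert_snd hS hq hmin) h fuel

lemma StaysAhead.card_le (h : StaysAhead I S X) : #X ≤ #S := by
  obtain ⟨m, -, -, hcard⟩ := h
  exact hcard.trans (card_filter_le _ _)

lemma StaysAhead.exists_ge (h : StaysAhead I S X) (hcard : #S ≤ #X) {s : ℕ} (hs : s ∈ S) :
    ∃ x ∈ X, s ≤ x := by
  obtain ⟨m, hmX, -, hm⟩ := h
  exact ⟨m, hmX, card_filter_eq_iff.1 ((card_filter_le _ _).antisymm (hcard.trans hm)) s hs⟩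

end IntervalFamily

section Filling

variable {lo hi bdg : ℕ} {X Y : Finset ℕ}

lemma exists_greedyB_succ (hcard : #X < bdg) (h : (Icc lo hi \ X).Nonempty) (fuel : ℕ) :
    ∃ c, IsGreatest (Icc lo hi \ X : Finset ℕ) c ∧
      greedyB lo hi bdg (fuel + 1) X = greedyB lo hi bdg fuel (insert c X) :=
  ⟨_, isGreatest_max' _ h, by rw [greedyB, dif_pos ⟨hcard, h⟩]⟩

lemma greedyB_induction {p : Finset ℕ → Prop}
    (step : ∀ X, p X → ∀ c ∈ Icc lo hi, p (insert c X)) (h : p X) (fuel : ℕ) :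
    p (greedyB lo hi bdg fuel X) := by
  induction fuel generalizing X with
  | zero => exact h
  | succ fuel ih =>
    by_cases hX : #X < bdg ∧ (Icc lo hi \ X).Nonempty
    · obtain ⟨c, hc, hstep⟩ := exists_greedyB_succ hX.1 hX.2 fuel
      exact hstep ▸ ih (step X h c (mem_sdiff.1 hc.1).1)
    · rwa [greedyB, dif_neg hX]

lemma subset_greedyB (fuel : ℕ) : X ⊆ greedyB lo hi bdg fuel X :=
  greedyB_induction (fun _ h _ _ => h.trans (subset_insert _ _)) Subset.rfl fuel

lemma greedyB_subset (hX : X ⊆ Y) (hY : Icc lo hi ⊆ Y) (fuel : ℕ) :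
    greedyB lo hi bdg fuel X ⊆ Y :=
  greedyB_induction (p := (· ⊆ Y)) (fun _ h _ hc => insert_subset (hY hc) h) hX fuel

lemma card_greedyB (hbdg : bdg ≤ #(Icc lo hi)) {fuel : ℕ} (hX : #X ≤ bdg)
    (hfuel : bdg ≤ #X + fuel) : #(greedyB lo hi bdg fuel X) = bdg := by
  induction fuel generalizing X with
  | zero => exact hX.antisymm hfuel
  | succ fuel ih =>
    rcases hX.lt_or_eq with hlt | heq
    · obtain ⟨d, hd⟩ := exists_mem_notMem_of_card_lt_card (hlt.trans_le hbdg)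
      obtain ⟨c, hc, hstep⟩ := exists_greedyB_succ hlt ⟨d, mem_sdiff.2 hd⟩ fuel
      have hcard := card_insert_of_notMem (mem_sdiff.1 hc.1).2
      exact hstep ▸ ih (by omega) (by omega)
    · rw [greedyB, dif_neg fun h => h.1.ne heq, heq]

lemma right_mem_greedyB (hle : lo ≤ hi) (hX : #X < bdg) {fuel : ℕ} (hfuel : fuel ≠ 0) :
    hi ∈ greedyB lo hi bdg fuel X := by
  obtain ⟨fuel, rfl⟩ := Nat.exists_eq_succ_of_ne_zero hfuel
  by_cases hhi : hi ∈ X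
  · exact subset_greedyB _ hhi
  · have hmem : hi ∈ Icc lo hi \ X := mem_sdiff.2 ⟨right_mem_Icc.2 hle, hhi⟩
    obtain ⟨c, hc, hstep⟩ := exists_greedyB_succ hX ⟨hi, hmem⟩ fuel
    have hchi : c = hi := (mem_Icc.1 (mem_sdiff.1 hc.1).1).2.antisymm (hc.2 hmem)
    rw [hstep, hchi]
    exact subset_greedyB _ (mem_insert_self _ _)

end Filling

/-- `Y` starts no later and ends no earlier than `S`; for nonempty sets,
`min Y ≤ min S` and `max S ≤ max Y`. This makes `Y` as good as `S` on paths through the core. -/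
def Spans {α : Type*} [LE α] (Y S : Finset α) : Prop :=
  ∀ s ∈ S, (∃ y ∈ Y, y ≤ s) ∧ ∃ y ∈ Y, s ≤ y

lemma IsZSeg.inter_nonempty_of_spans {n : ℕ} {L : Fin n → ℕ} {al ar : Fin n → Bool} {i : Fin n}
    {s S Y : Finset ℕ} (hs : IsZSeg L al ar i s) (hY : Y ⊆ Icc 1 (L i)) (hYS : Spans Y S)
    (h : (S ∩ s).Nonempty) : (Y ∩ s).Nonempty := by
  obtain ⟨j, hj⟩ := h
  obtain ⟨hjS, hjs⟩ := mem_inter.1 hj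
  obtain ⟨⟨x, hxY, hxj⟩, ⟨y, hyY, hjy⟩⟩ := hYS j hjS
  rcases hs with rfl | ⟨-, c, -, -, rfl⟩ | ⟨-, c, -, -, rfl⟩
  · exact absurd hjs (notMem_empty j)
  · exact ⟨x, mem_inter.2
      ⟨hxY, mem_Icc.2 ⟨(mem_Icc.1 (hY hxY)).1, hxj.trans (mem_Icc.1 hjs).2⟩⟩⟩
  · exact ⟨y, mem_inter.2
      ⟨hyY, mem_Icc.2 ⟨(mem_Icc.1 hjs).1.trans hjy, (mem_Icc.1 (hY hyY)).2⟩⟩⟩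

section Petals

variable {n : ℕ} {i : Fin n} {s : Finset ℕ}

lemma fv_mem_petalSeg {k : Fin n} {j : ℕ} : fv k j ∈ petalSeg i s ↔ k = i ∧ j ∈ s := by
  simp only [petalSeg, fv, mem_image, Option.some.injEq, Prod.mk.injEq]
  grind

lemma fz_notMem_petalSeg : fz ∉ petalSeg i s := by
  simp [petalSeg, fv, fz]

lemma card_petalSeg (i : Fin n) (s : Finset ℕ) : #(petalSeg i s) = #s :=
  card_image_of_injective _ fun a c h => by simpa [fv] using h

lemma petalSeg_nonempty : (petalSeg i s).Nonempty ↔ s.Nonempty :=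
  image_nonempty

/-- The set of non-core vertices whose indices on petal `i` are `Y i`, for every `i`.
Every solution has this form, which lets petals be treated one at a time. -/
def petalUnion (Y : Fin n → Finset ℕ) : Finset (FVertex n) :=
  univ.biUnion fun i => petalSeg i (Y i)

lemma fv_mem_petalUnion {Y : Fin n → Finset ℕ} {j : ℕ} : fv i j ∈ petalUnion Y ↔ j ∈ Y i := by
  simp [petalUnion, fv_mem_petalSeg]

lemma fz_notMem_petalUnion {Y : Fin n → Finset ℕ} : fz ∉ petalUnion Y := by
  simp [petalUnion, fz_notMem_petalSeg]

lemma petalUnion_inter_petalSeg (Y : Fin n → Finset ℕ) (i : Fin n) (s : Finset ℕ) :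
    petalUnion Y ∩ petalSeg i s = petalSeg i (Y i ∩ s) := by
  ext (_ | ⟨k, j⟩)
  · exact iff_of_false (fun h => fz_notMem_petalSeg (mem_inter.1 h).2) fz_notMem_petalSeg
  · change fv k j ∈ _ ↔ fv k j ∈ _
    simp only [mem_inter, fv_mem_petalUnion, fv_mem_petalSeg]
    grind

lemma petalUnion_inter_petalSeg_nonempty {Y : Fin n → Finset ℕ} :
    (petalUnion Y ∩ petalSeg i s).Nonempty ↔ (Y i ∩ s).Nonempty := by
  rw [petalUnion_inter_petalSeg, petalSeg_nonempty]

lemma petalUnion_inter_corePath_nonempty {Y : Fin n → Finset ℕ} {i₁ i₂ : Fin n}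
    {s₁ s₂ : Finset ℕ} :
    (petalUnion Y ∩ insert fz (petalSeg i₁ s₁ ∪ petalSeg i₂ s₂)).Nonempty ↔
      (Y i₁ ∩ s₁).Nonempty ∨ (Y i₂ ∩ s₂).Nonempty := by
  rw [inter_insert_of_notMem fz_notMem_petalUnion, inter_union_distrib_left, union_nonempty,
    petalUnion_inter_petalSeg_nonempty, petalUnion_inter_petalSeg_nonempty]

end Petals

namespace FlowerInstance

variable {n : ℕ} {F : FlowerInstance n} {i : Fin n} {ℓ : ℕ}

lemma mem_innerIntervals {q : ℕ × ℕ} :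
    q ∈ F.innerIntervals i ↔
      1 ≤ q.1 ∧ q.1 ≤ q.2 ∧ q.2 ≤ F.L i ∧ petalSeg i (Icc q.1 q.2) ∈ F.P := by
  simp only [innerIntervals, mem_filter, mem_product, mem_Icc]
  grind

section Canonical

variable {S : Finset ℕ}

lemma greedyA_subset_canonicalAux :
    greedyA (F.innerIntervals i) #(F.innerIntervals i) {ℓ} ⊆ F.canonicalAux i ℓ :=
  subset_greedyB _

lemma self_mem_canonicalAux : ℓ ∈ F.canonicalAux i ℓ :=
  greedyA_subset_canonicalAux (subset_greedyA _ (mem_singleton_self ℓ))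

lemma canonicalAux_subset (hℓ : ℓ ∈ Icc 1 (F.L i)) : F.canonicalAux i ℓ ⊆ Icc 1 (F.L i) := by
  refine greedyB_subset (greedyA_subset (singleton_subset_iff.2 hℓ) (fun q hq => ?_) _)
    (Icc_subset_Icc_left (mem_Icc.1 hℓ).1) _
  obtain ⟨h1, h12, h2, -⟩ := mem_innerIntervals.1 hq
  exact mem_Icc.2 ⟨h1.trans h12, h2⟩

lemma isHittingSet_canonicalAux : IsHittingSet (F.innerIntervals i) (F.canonicalAux i ℓ) :=
  (isHittingSet_greedyA (fun _ hq => (mem_innerIntervals.1 hq).2.1) (card_filter_le _ _)).mono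
    greedyA_subset_canonicalAux

lemma card_canonicalAux (hSL : S ⊆ Icc 1 (F.L i)) (hSb : #S = F.b i)
    (hS : IsHittingSet (F.innerIntervals i) S) (hℓ : IsLeast (S : Set ℕ) ℓ) :
    #(F.canonicalAux i ℓ) = F.b i := by
  have hSℓ : S ⊆ Icc ℓ (F.L i) := fun s hs => mem_Icc.2 ⟨hℓ.2 hs, (mem_Icc.1 (hSL hs)).2⟩
  have hahead := (staysAhead_singleton hS hℓ).greedyA hS #(F.innerIntervals i)
  exact card_greedyB (hSb ▸ card_le_card hSℓ) (hSb ▸ hahead.card_le) (Nat.le_add_left _ _)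

lemma spans_canonicalAux (hSL : S ⊆ Icc 1 (F.L i)) (hSb : #S = F.b i)
    (hS : IsHittingSet (F.innerIntervals i) S) (hℓ : IsLeast (S : Set ℕ) ℓ) :
    Spans (F.canonicalAux i ℓ) S := by
  refine fun s hs => ⟨⟨ℓ, self_mem_canonicalAux, hℓ.2 hs⟩, ?_⟩
  rcases lt_or_ge #(greedyA (F.innerIntervals i) #(F.innerIntervals i) {ℓ}) (F.b i) with hlt | hge
  · have hℓL : ℓ ≤ F.L i := (mem_Icc.1 (hSL hℓ.1)).2
    exact ⟨F.L i, right_mem_greedyB hℓL hlt (Nat.ne_zero_of_lt hlt), (mem_Icc.1 (hSL hs)).2⟩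
  · have hahead := (staysAhead_singleton hS hℓ).greedyA hS #(F.innerIntervals i)
    obtain ⟨x, hx, hsx⟩ := hahead.exists_ge (hSb ▸ hge) hs
    exact ⟨x, greedyA_subset_canonicalAux hx, hsx⟩

lemma canonical_eq_some (hℓ : ∀ q ∈ F.innerIntervals i, ℓ ≤ q.2)
    (hcard : #(F.canonicalAux i ℓ) = F.b i) : F.canonical i ℓ = some (F.canonicalAux i ℓ) := by
  rw [canonical, if_neg fun ⟨q, hq, hlt⟩ => (hℓ q hq).not_gt hlt, if_pos hcard]

lemma exists_canonical_spans (hSL : S ⊆ Icc 1 (F.L i)) (hSb : #S = F.b i)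
    (hS : IsHittingSet (F.innerIntervals i) S) :
    ∃ ℓ Y, F.canonical i ℓ = some Y ∧ Y ⊆ Icc 1 (F.L i) ∧ #Y = F.b i ∧
      IsHittingSet (F.innerIntervals i) Y ∧ Spans Y S := by
  have hne : S.Nonempty := card_pos.1 (hSb ▸ F.hb i)
  have hmin : IsLeast (S : Set ℕ) (S.min' hne) := isLeast_min' S hne
  have hcard := card_canonicalAux hSL hSb hS hmin
  refine ⟨_, _, canonical_eq_some (fun q hq => ?_) hcard, canonicalAux_subset (hSL hmin.1), hcard,
    isHittingSet_canonicalAux, spans_canonicalAux hSL hSb hS hmin⟩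
  obtain ⟨s, hs⟩ := hS q hq
  obtain ⟨hsS, hsq⟩ := mem_inter.1 hs
  exact (hmin.2 hsS).trans (mem_Icc.1 hsq).2

end Canonical

section Solutions

variable {S Y : Fin n → Finset ℕ}

lemma petalUnion_inter_petal (hY : Y i ⊆ Icc 1 (F.L i)) :
    petalUnion Y ∩ F.petal i = petalSeg i (Y i) := by
  rw [petal, petalUnion_inter_petalSeg, inter_eq_left.2 hY]

lemma isSolution_petalUnion_iff (hY : ∀ i, Y i ⊆ Icc 1 (F.L i)) :
    F.IsSolution (petalUnion Y) ↔
      (∀ p ∈ F.P, (petalUnion Y ∩ p).Nonempty) ∧ ∀ i, #(Y i) = F.b i := by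
  simp only [IsSolution, petalUnion_inter_petal (hY _), card_petalSeg, and_iff_right_iff_imp]
  rintro - (_ | ⟨i, j⟩) hx
  · exact absurd hx fz_notMem_petalUnion
  · obtain ⟨h1, hL⟩ := mem_Icc.1 (hY i (fv_mem_petalUnion.1 hx))
    exact ⟨i, j, h1, hL, rfl⟩

lemma IsSolution.exists_eq_petalUnion {X : Finset (FVertex n)} (hX : F.IsSolution X) :
    ∃ Y : Fin n → Finset ℕ, (∀ i, Y i ⊆ Icc 1 (F.L i)) ∧ X = petalUnion Y := by
  refine ⟨fun i => {j ∈ Icc 1 (F.L i) | fv i j ∈ X}, fun i => filter_subset _ _, ?_⟩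
  ext x
  constructor
  · intro hx
    obtain ⟨i, j, h1, hL, rfl⟩ := hX.1 x hx
    exact fv_mem_petalUnion.2 (mem_filter.2 ⟨mem_Icc.2 ⟨h1, hL⟩, hx⟩)
  · rcases x with _ | ⟨i, j⟩
    · exact fun hx => absurd hx fz_notMem_petalUnion
    · exact fun hx => (mem_filter.1 (fv_mem_petalUnion.1 hx)).2

lemma isHittingSet_innerIntervals (h : ∀ p ∈ F.P, (petalUnion S ∩ p).Nonempty) (i : Fin n) :
    IsHittingSet (F.innerIntervals i) (S i) := fun _ hq =>
  petalUnion_inter_petalSeg_nonempty.1 (h _ (mem_innerIntervals.1 hq).2.2.2)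

lemma petalUnion_inter_nonempty_of_spans (hY : ∀ i, Y i ⊆ Icc 1 (F.L i))
    (hYI : ∀ i, IsHittingSet (F.innerIntervals i) (Y i)) (hYS : ∀ i, Spans (Y i) (S i))
    {p : Finset (FVertex n)} (hp : p ∈ F.P) (h : (petalUnion S ∩ p).Nonempty) :
    (petalUnion Y ∩ p).Nonempty := by
  rcases F.hP p hp with ⟨i, a, c, ha, hac, hc, rfl⟩ | ⟨i₁, i₂, s₁, s₂, hs₁, hs₂, -, rfl⟩
  · exact petalUnion_inter_petalSeg_nonempty.2
      (hYI i (a, c) (mem_innerIntervals.2 ⟨ha, hac, hc, hp⟩))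
  · rw [petalUnion_inter_corePath_nonempty] at h ⊢
    exact h.imp (hs₁.inter_nonempty_of_spans (hY i₁) (hYS i₁))
      (hs₂.inter_nonempty_of_spans (hY i₂) (hYS i₂))

end Solutions

end FlowerInstance

/-- **Lemma: a canonical solution exists.** If an instance
`(G, z, P, b)` of Hitting Paths in a Flower has a solution `X'`, then it has a
globally canonical solution `X`: a solution such that for every petal `R_i` the
set `X ∩ V(R_i)` is a well-defined canonical solution for `R_i`. -/
theorem stmt_6 {n : ℕ} (F : FlowerInstance n) (X' : Finset (FVertex n))
    (hX' : F.IsSolution X') :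
    ∃ X : Finset (FVertex n), F.IsSolution X ∧
      ∀ i : Fin n, ∃ (ℓ : ℕ) (Xi : Finset ℕ),
        F.canonical i ℓ = some Xi ∧ X ∩ F.petal i = petalSeg i Xi := by
  obtain ⟨S, hSL, rfl⟩ := hX'.exists_eq_petalUnion
  obtain ⟨hSP, hSb⟩ := (FlowerInstance.isSolution_petalUnion_iff hSL).1 hX'
  choose ℓ Y hcan hYL hYb hYI hYS using fun i => FlowerInstance.exists_canonical_spans (hSL i)
    (hSb i) (FlowerInstance.isHittingSet_innerIntervals hSP i)
  have hYP : ∀ p ∈ F.P, (petalUnion Y ∩ p).Nonempty := fun p hp =>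
    FlowerInstance.petalUnion_inter_nonempty_of_spans hYL hYI hYS hp (hSP p hp)
  exact ⟨petalUnion Y, (FlowerInstance.isSolution_petalUnion_iff hYL).2 ⟨hYP, hYb⟩,
    fun i => ⟨ℓ i, Y i, hcan i, FlowerInstance.petalUnion_inter_petal (hYL i)⟩⟩
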